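/- There exist real bivariate polynomials p⁺, q⁺, p⁻, q⁻ of total degree at most 1 such that the first-order Melnikov function M has at least 3 simple zeros in (0,∞), i.e., at least 3 points h₀ > 0 with M(h₀) = 0 and M′(h₀) ≠ 0. -/

import Mathlib

/-!
With `q⁺ = -1/40 + (2/π) y`, `p⁺ = 1` and `p⁻ = q⁻ = 0` the Melnikov integral is elementary.
At the switching angle `τ(h)` one has `√h cos τ = σ(h)` and `√h sin τ = σ(h)³`, so `M = F ∘ σ` on
`(0,∞)` with `F u = u (u⁵ - 2u² + u - 1/20)`. The quintic factor changes sign on `[0, 1/4]`,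
`[3/10, 7/10]` and `[1, 11/10]`, and its derivative `5u⁴ - 4u + 1` does not vanish there, so `F` has
three simple positive zeros. Since `σ` is the inverse of the diffeomorphism `u ↦ u² + u⁶` of
`(0,∞)`, they transport to simple zeros of `M`.
-/

open MeasureTheory intervalIntegral

/-- `τ(h) = arctan(σ(h)²)`, the angle of the intersection point of the circle
`x² + y² = h` with the switching curve `y = x³`. -/
noncomputable def tau (σ : ℝ → ℝ) (h : ℝ) : ℝ := Real.arctan ((σ h) ^ 2)

/-- `J i j h = h^((i+j+1)/2) ∫_{τ(h)}^{τ(h)+π} cosⁱθ sin^{j+1}θ dθ = ∫_{L_h⁺} xⁱ yʲ dx`. -/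
noncomputable def J (σ : ℝ → ℝ) (i j : ℕ) (h : ℝ) : ℝ :=
  h ^ (((i : ℝ) + (j : ℝ) + 1) / 2) *
    ∫ θ in tau σ h..(tau σ h + Real.pi), Real.cos θ ^ i * Real.sin θ ^ (j + 1)

/-- `I i j h = h^((i+j+1)/2) ∫_{τ(h)-π}^{τ(h)} cosⁱθ sin^{j+1}θ dθ = ∫_{L_h⁻} xⁱ yʲ dx`. -/
noncomputable def I (σ : ℝ → ℝ) (i j : ℕ) (h : ℝ) : ℝ :=
  h ^ (((i : ℝ) + (j : ℝ) + 1) / 2) *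
    ∫ θ in (tau σ h - Real.pi)..tau σ h, Real.cos θ ^ i * Real.sin θ ^ (j + 1)

/-- The first-order Melnikov function of the piecewise perturbed linear center with
switching curve `y = x³`, for perturbation polynomials `p⁺, q⁺, p⁻, q⁻`:
`M(h) = √h ∫_{τ(h)}^{τ(h)+π} (q⁺ sin θ + p⁺ cos θ) dθ
      + √h ∫_{τ(h)-π}^{τ(h)} (q⁻ sin θ + p⁻ cos θ) dθ`,
the polynomials being evaluated at `(√h cos θ, √h sin θ)`. -/
noncomputable def Mel (σ : ℝ → ℝ) (pp qp pm qm : MvPolynomial (Fin 2) ℝ) (h : ℝ) : ℝ :=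
  Real.sqrt h *
      (∫ θ in tau σ h..(tau σ h + Real.pi),
        MvPolynomial.eval ![Real.sqrt h * Real.cos θ, Real.sqrt h * Real.sin θ] qp *
            Real.sin θ +
          MvPolynomial.eval ![Real.sqrt h * Real.cos θ, Real.sqrt h * Real.sin θ] pp *
            Real.cos θ) +
    Real.sqrt h *
      (∫ θ in (tau σ h - Real.pi)..tau σ h,
        MvPolynomial.eval ![Real.sqrt h * Real.cos θ, Real.sqrt h * Real.sin θ] qm *
            Real.sin θ +
          MvPolynomial.eval ![Real.sqrt h * Real.cos θ, Real.sqrt h * Real.sin θ] pm *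
            Real.cos θ)

/-- The map `u ↦ u² + u⁶` is injective on positive reals, so `σ` is also its left inverse. -/
lemma sigma_left_inverse (σ : ℝ → ℝ)
    (hσ : ∀ h : ℝ, 0 < h → 0 < σ h ∧ (σ h) ^ 2 + (σ h) ^ 6 = h) {u : ℝ} (hu : 0 < u) :
    σ (u ^ 2 + u ^ 6) = u := by
  obtain ⟨h1, h2⟩ := hσ (u ^ 2 + u ^ 6) (by positivity)
  set v := σ (u ^ 2 + u ^ 6)
  rcases lt_trichotomy v u with h | h | h
  · have a : v ^ 2 < u ^ 2 := by gcongr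
    have b : v ^ 6 < u ^ 6 := by gcongr
    linarith
  · exact h
  · have a : u ^ 2 < v ^ 2 := by gcongr
    have b : u ^ 6 < v ^ 6 := by gcongr
    linarith

lemma sigma_continuousAt (σ : ℝ → ℝ)
    (hσ : ∀ h : ℝ, 0 < h → 0 < σ h ∧ (σ h) ^ 2 + (σ h) ^ 6 = h) {h : ℝ} (hh : 0 < h) :
    ContinuousAt σ h := by
  have hmono : StrictMonoOn σ (Set.Ioi 0) := by
    intro a ha b hb hab
    obtain ⟨a1, a2⟩ := hσ a ha
    obtain ⟨b1, b2⟩ := hσ b hb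
    by_contra! hc
    have c1 : σ b ^ 2 ≤ σ a ^ 2 := by gcongr
    have c2 : σ b ^ 6 ≤ σ a ^ 6 := by gcongr
    linarith
  refine hmono.continuousAt_of_image_mem_nhds (Ioi_mem_nhds hh) ?_
  refine Filter.mem_of_superset (Ioi_mem_nhds (hσ h hh).1) ?_
  intro u hu
  have hu : 0 < u := hu
  exact ⟨u ^ 2 + u ^ 6, Set.mem_Ioi.2 (by positivity), sigma_left_inverse σ hσ hu⟩

lemma sigma_hasDerivAt (σ : ℝ → ℝ)
    (hσ : ∀ h : ℝ, 0 < h → 0 < σ h ∧ (σ h) ^ 2 + (σ h) ^ 6 = h) {h : ℝ} (hh : 0 < h) :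
    HasDerivAt σ (2 * σ h + 6 * σ h ^ 5)⁻¹ h := by
  have hs := (hσ h hh).1
  refine HasDerivAt.of_local_left_inverse (f := fun u : ℝ => u ^ 2 + u ^ 6)
    (sigma_continuousAt σ hσ hh) ?_ (by positivity) ?_
  · exact ((hasDerivAt_pow 2 (σ h)).add (hasDerivAt_pow 6 (σ h))).congr_deriv (by norm_num)
  · filter_upwards [Ioi_mem_nhds hh] with y hy using (hσ y hy).2

lemma sqrt_mul_cos_sin_tau (σ : ℝ → ℝ)
    (hσ : ∀ h : ℝ, 0 < h → 0 < σ h ∧ (σ h) ^ 2 + (σ h) ^ 6 = h) {h : ℝ} (hh : 0 < h) :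
    √h * Real.cos (tau σ h) = σ h ∧ √h * Real.sin (tau σ h) = σ h ^ 3 := by
  obtain ⟨h1, h2⟩ := hσ h hh
  have hs : √h = σ h * √(1 + (σ h ^ 2) ^ 2) := by
    have e : h = σ h ^ 2 * (1 + (σ h ^ 2) ^ 2) := by linear_combination -h2
    rw [congrArg Real.sqrt e,
      Real.sqrt_mul (by positivity), Real.sqrt_sq h1.le]
  have hp : √(1 + (σ h ^ 2) ^ 2) ≠ 0 := by positivity
  rw [tau, Real.cos_arctan, Real.sin_arctan, hs]
  constructor <;> field_simp

lemma Mel_eq (σ : ℝ → ℝ)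
    (hσ : ∀ h : ℝ, 0 < h → 0 < σ h ∧ (σ h) ^ 2 + (σ h) ^ 6 = h) {h : ℝ} (hh : 0 < h) :
    Mel σ 1 (MvPolynomial.C (-1 / 40) + MvPolynomial.C (2 / Real.pi) * MvPolynomial.X 1) 0 0 h
      = σ h * (σ h ^ 5 - 2 * σ h ^ 2 + σ h - 1 / 20) := by
  obtain ⟨hc, hs⟩ := sqrt_mul_cos_sin_tau σ hσ hh
  have h2 := (hσ h hh).2
  have hint : (∫ θ in tau σ h..(tau σ h + Real.pi),
      ((-1 / 40 + 2 / Real.pi * (√h * Real.sin θ)) * Real.sin θ + Real.cos θ))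
      = -1 / 20 * Real.cos (tau σ h) - 2 * Real.sin (tau σ h) + √h := by
    have e : ∀ θ : ℝ, (-1 / 40 + 2 / Real.pi * (√h * Real.sin θ)) * Real.sin θ + Real.cos θ
        = -1 / 40 * Real.sin θ + 2 / Real.pi * √h * Real.sin θ ^ 2 + Real.cos θ := by
      intro θ; ring
    simp_rw [e]
    rw [intervalIntegral.integral_add
        (Continuous.intervalIntegrable (by fun_prop) _ _)
        (Continuous.intervalIntegrable (by fun_prop) _ _),
      intervalIntegral.integral_add
        (Continuous.intervalIntegrable (by fun_prop) _ _)
        (Continuous.intervalIntegrable (by fun_prop) _ _),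
      intervalIntegral.integral_const_mul, intervalIntegral.integral_const_mul,
      integral_sin, integral_sin_sq, integral_cos, Real.cos_add_pi, Real.sin_add_pi]
    have := Real.pi_ne_zero
    field_simp
    ring
  have hh2 : √h * √h = h := Real.mul_self_sqrt hh.le
  simp only [Mel, map_add, map_mul, map_one, map_zero, MvPolynomial.eval_C, MvPolynomial.eval_X,
    Matrix.cons_val_one, Matrix.cons_val_fin_one, one_mul, zero_mul, add_zero,
    intervalIntegral.integral_zero, mul_zero]
  rw [hint]
  linear_combination (-1 / 20) * hc - 2 * hs + hh2 - h2

/-- A positive root `u` of the quintic factor at which its derivative does not vanish gives a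
simple zero of `M` at `u² + u⁶`. -/
lemma simple_zero_of_root (σ : ℝ → ℝ)
    (hσ : ∀ h : ℝ, 0 < h → 0 < σ h ∧ (σ h) ^ 2 + (σ h) ^ 6 = h) {u : ℝ} (hu : 0 < u)
    (hroot : u ^ 5 - 2 * u ^ 2 + u - 1 / 20 = 0) (hd : 5 * u ^ 4 - 4 * u + 1 ≠ 0) :
    0 < u ^ 2 + u ^ 6 ∧
    Mel σ 1 (MvPolynomial.C (-1 / 40) + MvPolynomial.C (2 / Real.pi) * MvPolynomial.X 1) 0 0
      (u ^ 2 + u ^ 6) = 0 ∧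
    deriv (Mel σ 1
      (MvPolynomial.C (-1 / 40) + MvPolynomial.C (2 / Real.pi) * MvPolynomial.X 1) 0 0)
      (u ^ 2 + u ^ 6) ≠ 0 := by
  have hh : 0 < u ^ 2 + u ^ 6 := by positivity
  have hsu := sigma_left_inverse σ hσ hu
  refine ⟨hh, by rw [Mel_eq σ hσ hh, hsu, hroot, mul_zero], ?_⟩
  have hev : Mel σ 1
      (MvPolynomial.C (-1 / 40) + MvPolynomial.C (2 / Real.pi) * MvPolynomial.X 1) 0 0
      =ᶠ[nhds (u ^ 2 + u ^ 6)]
      fun h => (fun v : ℝ => v * (v ^ 5 - 2 * v ^ 2 + v - 1 / 20)) (σ h) := by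
    filter_upwards [Ioi_mem_nhds hh] with y hy using Mel_eq σ hσ hy
  have hF : HasDerivAt (fun v : ℝ => v * (v ^ 5 - 2 * v ^ 2 + v - 1 / 20))
      (u * (5 * u ^ 4 - 4 * u + 1)) (σ (u ^ 2 + u ^ 6)) := by
    rw [hsu]
    have := (hasDerivAt_id u).mul ((((hasDerivAt_pow 5 u).sub
      ((hasDerivAt_pow 2 u).const_mul 2)).add (hasDerivAt_id u)).sub_const (1 / 20))
    refine this.congr_deriv ?_
    simp only [Pi.add_apply, Pi.sub_apply, id]
    push_cast
    linear_combination hroot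
  have hs := sigma_hasDerivAt σ hσ hh
  rw [hsu] at hs
  rw [((HasDerivAt.comp _ hF hs).congr_of_eventuallyEq hev).deriv]
  have : 2 * u + 6 * u ^ 5 ≠ 0 := by positivity
  exact mul_ne_zero (mul_ne_zero hu.ne' hd) (inv_ne_zero this)

/-- There exist degree-1 perturbations whose first-order Melnikov function has at
least 3 simple zeros on `(0,∞)`. -/
theorem Mel_three_simple_zeros (σ : ℝ → ℝ)
    (hσ : ∀ h : ℝ, 0 < h → 0 < σ h ∧ (σ h) ^ 2 + (σ h) ^ 6 = h) :
    ∃ pp qp pm qm : MvPolynomial (Fin 2) ℝ,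
      pp.totalDegree ≤ 1 ∧ qp.totalDegree ≤ 1 ∧
      pm.totalDegree ≤ 1 ∧ qm.totalDegree ≤ 1 ∧
      ∃ S : Finset ℝ, 3 ≤ S.card ∧
        ∀ h₀ ∈ S, 0 < h₀ ∧ Mel σ pp qp pm qm h₀ = 0 ∧
          deriv (Mel σ pp qp pm qm) h₀ ≠ 0 := by
  have hcont : Continuous fun u : ℝ => u ^ 5 - 2 * u ^ 2 + u - 1 / 20 := by fun_prop
  obtain ⟨a, ⟨ha0, ha1⟩, ha⟩ := intermediate_value_Ioo (a := (0 : ℝ)) (b := 1 / 4) (by norm_num)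
    hcont.continuousOn (show (0 : ℝ) ∈ Set.Ioo _ _ by constructor <;> norm_num)
  obtain ⟨b, ⟨hb0, hb1⟩, hb⟩ := intermediate_value_Ioo' (a := (3 / 10 : ℝ)) (b := 7 / 10)
    (by norm_num) hcont.continuousOn (show (0 : ℝ) ∈ Set.Ioo _ _ by constructor <;> norm_num)
  obtain ⟨c, ⟨hc0, hc1⟩, hc⟩ := intermediate_value_Ioo (a := (1 : ℝ)) (b := 11 / 10) (by norm_num)
    hcont.continuousOn (show (0 : ℝ) ∈ Set.Ioo _ _ by constructor <;> norm_num)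
  have da : 5 * a ^ 4 - 4 * a + 1 ≠ 0 := by
    have : 0 < a ^ 4 := by positivity
    linarith
  have db : 5 * b ^ 4 - 4 * b + 1 ≠ 0 := by
    -- `b⁴` lies below its chord: `b² ≤ b - 21/100`, and then the same for the square of `b²`.
    have h1 : b ^ 2 ≤ b - 21 / 100 := by nlinarith
    have h2 : (b ^ 2) ^ 2 ≤ 58 / 100 * b ^ 2 - 441 / 10000 := by
      have l : 9 / 100 ≤ b ^ 2 := by nlinarith
      have r : b ^ 2 ≤ 49 / 100 := by nlinarith
      nlinarith
    have : b ^ 4 = (b ^ 2) ^ 2 := by ring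
    apply ne_of_lt
    linarith
  have dc : 5 * c ^ 4 - 4 * c + 1 ≠ 0 := by
    have : c ^ 1 ≤ c ^ 4 := pow_le_pow_right₀ hc0.le (by norm_num)
    apply ne_of_gt
    linarith
  have key : ∀ x y : ℝ, 0 < x → x < y → x ^ 2 + x ^ 6 < y ^ 2 + y ^ 6 := by
    intro x y hx hxy
    gcongr
  have hab := key a b ha0 (by linarith)
  have hbc := key b c (by linarith) (by linarith)
  refine ⟨1, MvPolynomial.C (-1 / 40) + MvPolynomial.C (2 / Real.pi) * MvPolynomial.X 1, 0, 0,
    by simp, ?_, by simp, by simp, {a ^ 2 + a ^ 6, b ^ 2 + b ^ 6, c ^ 2 + c ^ 6}, ?_, ?_⟩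
  · refine (MvPolynomial.totalDegree_add _ _).trans (max_le (by simp) ?_)
    refine (MvPolynomial.totalDegree_mul _ _).trans ?_
    simp
  · rw [Finset.card_eq_three.2 ⟨_, _, _, hab.ne, (hab.trans hbc).ne, hbc.ne, rfl⟩]
  · intro h₀ hS
    simp only [Finset.mem_insert, Finset.mem_singleton] at hS
    rcases hS with rfl | rfl | rfl
    · exact simple_zero_of_root σ hσ ha0 ha da
    · exact simple_zero_of_root σ hσ (by linarith) hb db
    · exact simple_zero_of_root σ hσ (by linarith) hc dc
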